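/- Let F be a free group, H ≤ F a finitely generated subgroup, and g ∈ F. Then g depends on H (i.e., the homomorphism φ_g : H ∗ ⟨x⟩ → F is not injective) if and only if the rank of the subgroup ⟨H, g⟩ generated by H and g is at most the rank of H. -/

import Mathlib

open scoped Monoid.Coprod

variable {F : Type*}

/-- The canonical homomorphism `φ_g : H ∗ ⟨x⟩ → F` from the free product of `H` with an
infinite cyclic group (the free group on one generator `x`), restricting to the inclusion
`H ↪ F` and sending `x` to `g`. -/
noncomputable def phi [Group F] (H : Subgroup F) (g : F) :
    (↥H ∗ FreeGroup Unit) →* F :=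
  Monoid.Coprod.lift H.subtype (FreeGroup.lift fun _ => g)

/-- `g` depends on `H` (is algebraic over `H`) if `φ_g` is not injective. -/
def Depends [Group F] (H : Subgroup F) (g : F) : Prop :=
  ¬ Function.Injective (phi H g)

/-- `dep H`: the set of elements of `F` that depend on `H`. -/
def depSet [Group F] (H : Subgroup F) : Set F := {g | Depends H g}

/-- `Dep H`: the subgroup generated by the elements that depend on `H`. -/
noncomputable def DepSubgroup [Group F] (H : Subgroup F) : Subgroup F :=
  Subgroup.closure (depSet H)

/-- The rank of a subgroup: the minimal cardinality of a generating set. For subgroups of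
free groups this equals the cardinality of a free basis. -/
noncomputable def rk [Group F] (H : Subgroup F) : Cardinal :=
  ⨅ S : {S : Set F // Subgroup.closure S = H}, Cardinal.mk S.1

/-- Left multiplication by `g`, restricted to the finite set `X` where possible and extended
arbitrarily to a permutation of `X`. -/
noncomputable def partialMulLeft {G : Type*} [Group G] (X : Set G) [Finite X] (g : G) :
    Equiv.Perm X :=
  let e : {x : X // g * x ∈ X} ≃ {y : X // g⁻¹ * y ∈ X} :=
    { toFun := fun x => ⟨⟨g * x.1, x.2⟩, by simp⟩
      invFun := fun y => ⟨⟨g⁻¹ * y.1, y.2⟩, by simp⟩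
      left_inv := fun x => by simp
      right_inv := fun y => by simp }
  open scoped Classical in
  letI : Fintype X := Fintype.ofFinite X
  letI : Finite {x | x ∈ X} := ‹Finite X›
  e.extendSubtype

theorem partialMulLeft_apply {G : Type*} [Group G] (X : Set G) [Finite X] (g : G) (x y : X)
    (h : g * (x : G) = y) : partialMulLeft X g x = y := by
  classical
  have hx : g * (x : G) ∈ X := h ▸ y.2
  exact (Equiv.extendSubtype_apply_of_mem _ x hx).trans (Subtype.ext h)

namespace FreeGroup

variable {α : Type*}

/-- Words act on a finite set containing the evaluations of all their suffixes. -/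
theorem lift_partialMulLeft_apply (X : Set (FreeGroup α)) [Finite X] (h1 : (1 : FreeGroup α) ∈ X)
    (L : List (α × Bool)) (hL : ∀ s, s <:+ L → mk s ∈ X) :
    lift (fun a => partialMulLeft X (of a)) (mk L) ⟨1, h1⟩ = ⟨mk L, hL L List.suffix_rfl⟩ := by
  induction L with
  | nil => simp [← one_eq_mk]
  | cons p t ih =>
    have ht := ih fun s hs => hL s (hs.trans (List.suffix_cons p t))
    obtain ⟨a, b⟩ := p
    have hsplit : lift (fun a => partialMulLeft X (of a)) (mk ((a, b) :: t)) =
        lift (fun a => partialMulLeft X (of a)) (mk [(a, b)]) *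
          lift (fun a => partialMulLeft X (of a)) (mk t) := by
      rw [← _root_.map_mul, mul_mk, List.singleton_append]
    rw [hsplit, Equiv.Perm.mul_apply, ht]
    cases b with
    | true =>
      change lift (fun a => partialMulLeft X (of a)) (of a) _ = _
      rw [lift_apply_of]
      exact partialMulLeft_apply _ _ _ _ rfl
    | false =>
      change lift (fun a => partialMulLeft X (of a)) (of a)⁻¹ _ = _
      rw [_root_.map_inv, lift_apply_of, Equiv.Perm.inv_eq_iff_eq]
      refine (partialMulLeft_apply _ _ _ _ ?_).symm
      change of a * ((of a)⁻¹ * mk t) = mk t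
      simp

instance residuallyFinite : Group.ResiduallyFinite (FreeGroup α) := by
  classical
  rw [Group.residuallyFinite_iff_exists_finiteIndex]
  intro w hw
  let L := w.toWord
  let X : Set (FreeGroup α) := mk '' {s | s <:+ L}
  have hfin : Finite X := by
    refine Set.Finite.to_subtype (Set.Finite.image _ ?_)
    exact (List.finite_toSet L.tails).subset fun s hs => (List.mem_tails s L).2 hs
  have h1 : (1 : FreeGroup α) ∈ X := ⟨[], List.nil_suffix, rfl⟩
  let f := lift fun a => partialMulLeft X (of a)
  refine ⟨f.ker, inferInstance, fun hmem => hw ?_⟩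
  have happly := congrArg Subtype.val
    (lift_partialMulLeft_apply X h1 L fun s hs => ⟨s, hs, rfl⟩)
  have hmk : mk L = w := mk_toWord
  have hone : lift (fun a => partialMulLeft X (of a)) (mk L) = 1 := hmk ▸ hmem
  rw [hone] at happly
  exact (happly.trans hmk).symm

end FreeGroup

/-- **Malcev**: finitely generated residually finite groups are Hopfian. -/
theorem Group.ResiduallyFinite.injective_of_surjective {G : Type*} [Group G] [Group.FG G]
    [Group.ResiduallyFinite G] (f : G →* G) (hf : Function.Surjective f) :
    Function.Injective f := by
  rw [injective_iff_map_eq_one]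
  intro w hw
  by_contra hne
  obtain ⟨N, hN⟩ := Group.exists_finiteIndexNormalSubgroup_notMem w hne
  let Q := G ⧸ N.toSubgroup
  have : Finite (G →* Q) := by
    obtain ⟨S, hS⟩ := Group.FG.out (G := G)
    refine Finite.of_injective (fun (ρ : G →* Q) (s : S) => ρ s) fun ρ₁ ρ₂ h => ?_
    exact MonoidHom.eq_of_eqOn_dense hS fun s hs => congrFun h ⟨s, hs⟩
  have hinj : Function.Injective fun ρ : G →* Q => ρ.comp f := fun ρ₁ ρ₂ h =>
    (MonoidHom.cancel_right hf).1 h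
  obtain ⟨ρ, hρ⟩ := Finite.surjective_of_injective hinj (QuotientGroup.mk' N.toSubgroup)
  have : QuotientGroup.mk' N.toSubgroup w = 1 := by
    rw [← hρ]
    simp [hw]
  exact hN ((QuotientGroup.eq_one_iff w).1 this)

namespace FreeGroupBasis

variable {ι G : Type*} [Group G]

theorem closure_range (b : FreeGroupBasis ι G) : Subgroup.closure (Set.range b) = ⊤ := by
  rw [show Set.range b = b.repr.symm.toMonoidHom '' Set.range FreeGroup.of by
      rw [← Set.range_comp]; rfl,
    ← MonoidHom.map_closure, FreeGroup.closure_range_of]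
  exact Subgroup.map_top_of_surjective _ b.repr.symm.surjective

open Cardinal in
/-- A generating set of a free group has at least as many elements as a basis. -/
theorem lift_mk_le_of_closure_eq_top.{u, v} {ι : Type u} {G : Type v} [Group G]
    (b : FreeGroupBasis ι G) {S : Set G} (hS : Subgroup.closure S = ⊤) :
    Cardinal.lift.{v} #ι ≤ Cardinal.lift.{u} #S := by
  let f : G →* Multiplicative (ι →₀ ℤ) := b.lift fun i => .ofAdd (Finsupp.single i 1)
  let T : Set (ι →₀ ℤ) := (fun g => (f g).toAdd) '' S
  have hmem (g : G) : (f g).toAdd ∈ Submodule.span ℤ T := by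
    have hg : g ∈ Subgroup.closure S := hS ▸ Subgroup.mem_top g
    induction hg using Subgroup.closure_induction with
    | mem x hx => exact Submodule.subset_span ⟨x, hx, rfl⟩
    | one => simp
    | mul x y _ _ hx hy => simpa using add_mem hx hy
    | inv x _ hx => simpa using hx
  have hspan : Submodule.span ℤ T = ⊤ := by
    rw [eq_top_iff, ← Finsupp.basisSingleOne.span_eq, Submodule.span_le]
    rintro _ ⟨i, rfl⟩
    simpa [f, FreeGroupBasis.lift] using hmem (b i)
  have hrank := rank_span_le (R := ℤ) T
  rw [hspan, rank_top] at hrank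
  replace hrank : #ι ≤ #T := (Finsupp.basisSingleOne (R := ℤ)).mk_eq_rank''.trans_le hrank
  calc Cardinal.lift.{v} #ι ≤ Cardinal.lift.{v} #T := lift_le.2 hrank
    _ ≤ Cardinal.lift.{u} #S := mk_image_le_lift

end FreeGroupBasis

open Cardinal in
theorem rk_eq_mk_of_basis.{u} {F ι : Type u} [Group F] {H : Subgroup F} (b : FreeGroupBasis ι H) :
    rk H = #ι := by
  refine le_antisymm ?_ ?_
  · refine (ciInf_le' _ ⟨Set.range fun i => (b i : F), ?_⟩).trans mk_range_le
    rw [show (Set.range fun i => (b i : F)) = H.subtype '' Set.range b by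
        rw [← Set.range_comp]; rfl,
      ← MonoidHom.map_closure, b.closure_range, ← MonoidHom.range_eq_map, H.range_subtype]
  · have : Nonempty {S : Set F // Subgroup.closure S = H} := ⟨⟨H, H.closure_eq⟩⟩
    refine le_ciInf fun ⟨S, hS⟩ => ?_
    subst hS
    have := b.lift_mk_le_of_closure_eq_top Subgroup.closure_closure_coe_preimage
    rw [lift_id, lift_id] at this
    exact this.trans (mk_preimage_of_injective _ _ Subtype.val_injective)

/-- A basis of `H` together with one new element is a basis of `H ∗ ⟨x⟩`. -/
noncomputable def FreeGroupBasis.coprodFreeGroupUnit {ι G : Type*} [Group G]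
    (b : FreeGroupBasis ι G) : FreeGroupBasis (Option ι) (G ∗ FreeGroup Unit) :=
  .ofRepr <| MonoidHom.toMulEquiv
    (Monoid.Coprod.lift (b.lift fun i => .of (some i)) (FreeGroup.lift fun _ => .of none))
    (FreeGroup.lift fun o => o.elim (.inr (.of ())) fun i => .inl (b i))
    (by
      refine Monoid.Coprod.hom_ext (b.ext_hom _ _ fun i => ?_) (FreeGroup.ext_hom _ _ fun _ => ?_)
      · simp [FreeGroupBasis.lift]
      · simp)
    (by
      refine FreeGroup.ext_hom _ _ fun o => ?_
      cases o <;> simp [FreeGroupBasis.lift])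

theorem range_phi {F : Type*} [Group F] (H : Subgroup F) (g : F) :
    (phi H g).range = H ⊔ Subgroup.closure {g} := by
  rw [phi, Monoid.Coprod.range_lift, H.range_subtype, FreeGroup.range_lift_eq_closure,
    Set.range_const]

/-- Surjections between free groups of the same finite rank are injective. -/
theorem FreeGroupBasis.injective_of_surjective {ι G G' : Type*} [Group G] [Group G'] [Finite ι]
    (b : FreeGroupBasis ι G) (b' : FreeGroupBasis ι G') (f : G →* G')
    (hf : Function.Surjective f) : Function.Injective f := by
  let h : FreeGroup ι →* FreeGroup ι :=
    b'.repr.toMonoidHom.comp (f.comp b.repr.symm.toMonoidHom)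
  have hh : Function.Injective h := Group.ResiduallyFinite.injective_of_surjective h
    (b'.repr.surjective.comp (hf.comp b.repr.symm.surjective))
  have hcomp : b'.repr ∘ f = h ∘ b.repr := by
    ext x
    simp [h]
  exact Function.Injective.of_comp (f := b'.repr) (hcomp ▸ hh.comp b.repr.injective)

open Cardinal in
/-- for finitely generated `H`, `g` depends on `H` iff
`rank ⟨H, g⟩ ≤ rank H`. -/
theorem dependence_iff_rank_le [Group F] [IsFreeGroup F] (H : Subgroup F) (hH : H.FG)
    (g : F) :
    Depends H g ↔ rk (H ⊔ Subgroup.closure {g}) ≤ rk H := by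
  let b := IsFreeGroup.basis H
  let bP := b.coprodFreeGroupUnit
  let bK := IsFreeGroup.basis (phi H g).range
  have hfin : rk H < ℵ₀ := by
    obtain ⟨S, hS⟩ := hH
    exact (ciInf_le' _ ⟨(S : Set F), hS⟩).trans_lt (S.finite_toSet.lt_aleph0)
  rw [← range_phi, rk_eq_mk_of_basis b] at *
  have : Finite (IsFreeGroup.Generators H) := lt_aleph0_iff_finite.1 hfin
  constructor
  · intro hdep
    by_contra! hlt
    rw [rk_eq_mk_of_basis bK] at hlt
    have hclosure : Subgroup.closure (Set.range ((phi H g).rangeRestrict ∘ bP)) = ⊤ := by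
      rw [Set.range_comp, ← MonoidHom.map_closure, bP.closure_range]
      exact Subgroup.map_top_of_surjective _ (phi H g).rangeRestrict_surjective
    have hle := bK.lift_mk_le_of_closure_eq_top hclosure
    rw [lift_id, lift_id] at hle
    have heq : #(IsFreeGroup.Generators (phi H g).range) = #(Option (IsFreeGroup.Generators H)) :=
      (hle.trans mk_range_le).antisymm (mk_option ▸ add_one_le_of_lt hlt)
    obtain ⟨e⟩ := Cardinal.eq.1 heq
    have hinj := bP.injective_of_surjective (bK.reindex e) (phi H g).rangeRestrict
      (phi H g).rangeRestrict_surjective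
    exact hdep ((MonoidHom.rangeRestrict_injective_iff).1 hinj)
  · intro hle hinj
    rw [rk_eq_mk_of_basis (bP.map (MonoidHom.ofInjective hinj)), mk_option] at hle
    obtain ⟨n, hn⟩ := lt_aleph0.1 hfin
    rw [hn] at hle
    norm_cast at hle
    omega
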